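/- Borel–Ritt–Gevrey theorem for asymptotics with respect to a germ (Proposition 7.14): Let d ≥ 1, s > 0, P holomorphic on D(0;R) with P(0) = 0 and P not identically zero, and let Π = Π_P(θ_1,θ_2;r) be a P-sector with θ_2 − θ_1 < sπ. Suppose (g_n) is a sequence of bounded holomorphic functions on D(0;ρ_1) with 0 < ρ_1 ≤ R and there are constants C, A > 0 with sup_{D(0;ρ_1)}|g_n| ≤ C·A^n·Γ(sn+1) for all n ∈ ℕ. Then there exist ρ > 0, a holomorphic function f on Π ∩ D(0;ρ), and constants K, B > 0 such that |f(x) − Σ_{n<N} g_n(x)·P(x)^n| ≤ K·B^N·Γ(sN+1)·|P(x)|^N for every N ∈ ℕ and every x ∈ Π ∩ D(0;ρ). -/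

import Mathlib

open Set Complex

noncomputable section

/-- Open polydisk of radius `r` centered at `0` in `ℂ^d`. -/
def polydisk (d : ℕ) (r : ℝ) : Set (Fin d → ℂ) :=
  {x | ∀ j, ‖x j‖ < r}

/-- The `P`-sector `Π_P(a,b;r)`. -/
def PSector (d : ℕ) (P : (Fin d → ℂ) → ℂ) (a b r : ℝ) : Set (Fin d → ℂ) :=
  {x | (∀ j, 0 < ‖x j‖ ∧ ‖x j‖ < r) ∧ P x ≠ 0 ∧
    ∃ θ ∈ Set.Ioo a b, P x = (‖P x‖ : ℂ) * Complex.exp (θ * Complex.I)}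

/-!
After a rotation the values of `P` lie in a sector around the positive real axis of half-opening
less than `s π / 2`, so `w = P ^ (-1 / s)` has positive real part, comparable to `|w|`. There
`P ^ n = w / Γ (s n + 1) * ∫ u ^ (s n) * exp (-w u)`, the integral being over `(0, ∞)`. Restricted
to `(0, T]`, this is of size `T ^ (s n) / Γ (s n + 1)`; for `T ^ s < 1 / A` the series `∑ gₙ Pⁿ`
with all monomials truncated in this way converges geometrically; its sum is `f`. In the remainder
of order `N`, a term `n < N` contributes its tail over `(T, ∞)` and a term `n ≥ N` its integral over
`(0, T]`. In both ranges `u ^ (s n) ≤ T ^ (s n - s N) * u ^ (s N)`, so every term is bounded by a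
complete integral of order `N`, which produces `Γ (s N + 1) * |P| ^ N`.

The sum is analytic in several (even infinitely many) variables because the Taylor series of its
terms can be added: iterated Cauchy estimates bound them uniformly on a common small ball.
-/

open MeasureTheory Filter Topology

open scoped NNReal ENNReal Nat

section SeriesOfAnalyticFunctions

variable {ι E F : Type*} [NormedAddCommGroup E] [NormedSpace ℂ E]
  [NormedAddCommGroup F] [NormedSpace ℂ F] [CompleteSpace F]

lemma norm_iteratedFDeriv_le_of_norm_le_on_ball {f : E → F} {x₀ : E} {ρ δ M : ℝ} (hδ : 0 < δ)
    (hf : AnalyticOnNhd ℂ f (Metric.ball x₀ ρ)) (hM : ∀ x ∈ Metric.ball x₀ ρ, ‖f x‖ ≤ M) (k : ℕ) :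
    ∀ x ∈ Metric.ball x₀ (ρ - k * δ), ‖iteratedFDeriv ℂ k f x‖ ≤ M * (2 / δ) ^ k := by
  induction k with
  | zero => simpa using hM
  | succ k ih =>
    intro x hx
    have hball : Metric.ball x δ ⊆ Metric.ball x₀ (ρ - k * δ) := by
      refine Metric.ball_subset_ball' ?_
      rw [Metric.mem_ball] at hx
      push_cast at hx
      linarith
    have hball_le : Metric.ball x₀ (ρ - k * δ) ⊆ Metric.ball x₀ ρ :=
      Metric.ball_subset_ball (sub_le_self _ (by positivity))
    have hdiff : DifferentiableOn ℂ (iteratedFDeriv ℂ k f) (Metric.ball x δ) :=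
      ((hf.iteratedFDeriv k).mono (hball.trans hball_le)).differentiableOn
    have hmaps : MapsTo (iteratedFDeriv ℂ k f) (Metric.ball x δ)
        (Metric.closedBall (iteratedFDeriv ℂ k f x) (2 * (M * (2 / δ) ^ k))) := by
      intro y hy
      have hx_le := ih x (hball (Metric.mem_ball_self hδ))
      have hy_le := ih y (hball hy)
      rw [Metric.mem_closedBall, dist_eq_norm]
      exact (norm_sub_le _ _).trans (by linarith)
    calc ‖iteratedFDeriv ℂ (k + 1) f x‖ = ‖fderiv ℂ (iteratedFDeriv ℂ k f) x‖ :=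
          norm_fderiv_iteratedFDeriv.symm
      _ ≤ 2 * (M * (2 / δ) ^ k) / δ := norm_fderiv_le_div_of_mapsTo_ball hdiff hmaps hδ
      _ = M * (2 / δ) ^ (k + 1) := by ring

/-- The Taylor series of `f` at `x₀` as a formal multilinear series, including the factors `1 / k!`
that `ftaylorSeries` omits. -/
def taylorFPowerSeries (f : E → F) (x₀ : E) : FormalMultilinearSeries ℂ E F :=
  fun k => (k ! : ℂ)⁻¹ • iteratedFDeriv ℂ k f x₀

-- Cauchy's estimate is iterated `k` times with steps `ρ / (2k)`, and `k ^ k ≤ k! * e ^ k`.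
lemma norm_taylorFPowerSeries_mul_pow_le {f : E → F} {x₀ : E} {ρ M : ℝ} (hρ : 0 < ρ)
    (hf : AnalyticOnNhd ℂ f (Metric.ball x₀ ρ)) (hM : ∀ x ∈ Metric.ball x₀ ρ, ‖f x‖ ≤ M) (k : ℕ) :
    ‖taylorFPowerSeries f x₀ k‖ * (ρ / (4 * Real.exp 1)) ^ k ≤ M := by
  have hx₀ : x₀ ∈ Metric.ball x₀ ρ := Metric.mem_ball_self hρ
  rcases k.eq_zero_or_pos with rfl | hk
  · simpa [taylorFPowerSeries] using hM x₀ hx₀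
  have hk' : (0 : ℝ) < k := mod_cast hk
  have hM_nonneg : 0 ≤ M := (norm_nonneg _).trans (hM x₀ hx₀)
  have hmem : x₀ ∈ Metric.ball x₀ (ρ - k * (ρ / (2 * k))) := by
    refine Metric.mem_ball_self ?_
    have : k * (ρ / (2 * k)) = ρ / 2 := by field_simp
    linarith
  have hderiv : ‖iteratedFDeriv ℂ k f x₀‖ ≤ M * (2 / (ρ / (2 * k))) ^ k :=
    norm_iteratedFDeriv_le_of_norm_le_on_ball (by positivity) hf hM k x₀ hmem
  have hexp : (k : ℝ) ^ k / k ! ≤ Real.exp 1 ^ k := by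
    simpa [← Real.exp_nat_mul] using Real.pow_div_factorial_le_exp k hk'.le k
  calc ‖taylorFPowerSeries f x₀ k‖ * (ρ / (4 * Real.exp 1)) ^ k
      = (k ! : ℝ)⁻¹ * ‖iteratedFDeriv ℂ k f x₀‖ * (ρ / (4 * Real.exp 1)) ^ k := by
        simp [taylorFPowerSeries, norm_smul]
    _ ≤ (k ! : ℝ)⁻¹ * (M * (2 / (ρ / (2 * k))) ^ k) * (ρ / (4 * Real.exp 1)) ^ k := by gcongr
    _ = M * ((k : ℝ) ^ k / k !) * ((Real.exp 1) ^ k)⁻¹ := by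
        have hbase : 2 / (ρ / (2 * k)) * (ρ / (4 * Real.exp 1)) = k * (Real.exp 1)⁻¹ := by
          field_simp
          norm_num
        rw [mul_assoc, mul_assoc, ← mul_pow, hbase, mul_pow, inv_pow]
        ring
    _ ≤ M * Real.exp 1 ^ k * ((Real.exp 1) ^ k)⁻¹ := by gcongr
    _ = M := mul_inv_cancel_right₀ (by positivity) M

lemma taylorFPowerSeries_apply_eq {f : E → F} {p : FormalMultilinearSeries ℂ E F} {x₀ : E}
    {r : ℝ≥0∞} (hp : HasFPowerSeriesOnBall f p x₀ r) (k : ℕ) (y : E) :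
    (taylorFPowerSeries f x₀ k fun _ => y) = p k fun _ => y := by
  have hfact : (k ! : ℂ) ≠ 0 := mod_cast k.factorial_ne_zero
  rw [taylorFPowerSeries, smul_apply, ← hp.factorial_smul y k, ← Nat.cast_smul_eq_nsmul ℂ,
    inv_smul_smul₀ hfact]

-- Restricting `f` to the complex line through `x₀` and `x₀ + y` reduces this to one variable.
lemma hasSum_taylorFPowerSeries {f : E → F} {x₀ y : E} {ρ : ℝ}
    (hf : AnalyticOnNhd ℂ f (Metric.ball x₀ ρ)) (hy : ‖y‖ < ρ) :
    HasSum (fun k => taylorFPowerSeries f x₀ k fun _ => y) (f (x₀ + y)) := by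
  obtain ⟨η, hyη, hηρ⟩ := exists_between hy
  have hη : 0 < η := (norm_nonneg y).trans_lt hyη
  obtain ⟨p, r, hp⟩ := hf x₀ (Metric.mem_ball_self (hη.trans hηρ))
  let line : ℂ →L[ℂ] E := ContinuousLinearMap.toSpanSingleton ℂ y
  let t : ℝ≥0 := ⟨ρ / η, (div_pos (hη.trans hηρ) hη).le⟩
  have ht : 1 < t := (one_lt_div hη).2 hηρ
  have hp_line :
      HasFPowerSeriesAt (fun z => f (x₀ + line z)) (p.compContinuousLinearMap line) 0 := by
    have hp_shift : HasFPowerSeriesOnBall (fun v => f (x₀ + v)) p (line 0) r := by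
      simpa [add_comm] using hp.comp_sub (-x₀)
    exact ⟨_, hp_shift.compContinuousLinearMap⟩
  have hdiff : DifferentiableOn ℂ (fun z => f (x₀ + line z)) (Metric.closedBall 0 t) := by
    intro z hz
    have hmem : x₀ + line z ∈ Metric.ball x₀ ρ := by
      have hz' : ‖z‖ ≤ ρ / η := mem_closedBall_zero_iff.1 hz
      have : ‖z‖ * ‖y‖ < ρ := calc
        ‖z‖ * ‖y‖ ≤ ρ / η * ‖y‖ := by gcongr
        _ < ρ / η * η := by gcongr; exact div_pos (hη.trans hηρ) hη
        _ = ρ := div_mul_cancel₀ _ hη.ne'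
      simpa [line, norm_smul] using this
    have hline : DifferentiableAt ℂ (fun z => x₀ + line z) z := by fun_prop
    exact ((hf _ hmem).differentiableAt.comp z hline).differentiableWithinAt
  have hcauchy := hdiff.hasFPowerSeriesOnBall (zero_lt_one.trans ht)
  rw [← hp_line.eq_formalMultilinearSeries ⟨_, hcauchy⟩] at hcauchy
  have hsum := hcauchy.hasSum (y := 1) (by simpa using ht)
  simp only [zero_add, FormalMultilinearSeries.compContinuousLinearMap_apply] at hsum
  have hline (k : ℕ) : (line ∘ fun _ : Fin k => (1 : ℂ)) = fun _ => y := by ext; simp [line]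
  simpa [hline, taylorFPowerSeries_apply_eq hp, line] using hsum

lemma hasFPowerSeriesOnBall_taylorFPowerSeries {f : E → F} {x₀ : E} {ρ M : ℝ} {r : ℝ≥0}
    (hρ : 0 < ρ) (hr : (r : ℝ) = ρ / (4 * Real.exp 1))
    (hf : AnalyticOnNhd ℂ f (Metric.ball x₀ ρ)) (hM : ∀ x ∈ Metric.ball x₀ ρ, ‖f x‖ ≤ M) :
    HasFPowerSeriesOnBall f (taylorFPowerSeries f x₀) x₀ r := by
  have hr_pos : (0 : ℝ) < r := hr ▸ by positivity
  refine ⟨FormalMultilinearSeries.le_radius_of_bound _ M fun k => ?_, mod_cast hr_pos,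
    fun {y} hy => hasSum_taylorFPowerSeries hf ?_⟩
  · rw [hr]
    exact norm_taylorFPowerSeries_mul_pow_le hρ hf hM k
  · have hyr : ‖y‖ < r := by simpa [Metric.eball_coe] using hy
    have hrρ : (r : ℝ) ≤ ρ := by
      rw [hr]
      exact div_le_self hρ.le (by linarith [Real.one_le_exp zero_le_one])
    exact hyr.trans_le hrρ

lemma hasFPowerSeriesOnBall_tsum {f : ι → E → F} {p : ι → FormalMultilinearSeries ℂ E F} {x₀ : E}
    {r : ℝ≥0} (hr : 0 < r) {M : ι → ℝ} (hM : Summable M)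
    (hf : ∀ i, HasFPowerSeriesOnBall (f i) (p i) x₀ r) (hp : ∀ i k, ‖p i k‖ * r ^ k ≤ M i) :
    HasFPowerSeriesOnBall (fun x => ∑' i, f i x) (fun k => ∑' i, p i k) x₀ r := by
  have hr' : (0 : ℝ) < r := hr
  have hM_nonneg (i : ι) : 0 ≤ M i := le_trans (by positivity) (hp i 0)
  have hp_le (i : ι) (k : ℕ) : ‖p i k‖ ≤ M i * (r ^ k : ℝ)⁻¹ :=
    (le_div_iff₀ (by positivity)).2 (hp i k)
  have hp_summable (k : ℕ) : Summable fun i => p i k :=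
    .of_norm_bounded (hM.mul_right _) fun i => hp_le i k
  refine ⟨?_, mod_cast hr, fun {y} hy => ?_⟩
  · refine FormalMultilinearSeries.le_radius_of_bound _ (∑' i, M i) fun k => ?_
    rw [← le_div_iff₀ (by positivity), div_eq_mul_inv, ← tsum_mul_right]
    exact tsum_of_norm_bounded (hM.mul_right _).hasSum fun i => hp_le i k
  · have hy' : ‖y‖ / r < 1 := by
      rw [div_lt_one hr']
      simpa [Metric.eball_coe] using hy
    have hterm_le (i : ι) (k : ℕ) : ‖p i k fun _ => y‖ ≤ M i * (‖y‖ / r) ^ k := calc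
      ‖p i k fun _ => y‖ ≤ ‖p i k‖ * ‖y‖ ^ k := by simpa using (p i k).le_opNorm fun _ => y
      _ ≤ M i * (r ^ k : ℝ)⁻¹ * ‖y‖ ^ k := by gcongr; exact hp_le i k
      _ = M i * (‖y‖ / r) ^ k := by rw [div_pow]; ring
    have hdouble : Summable fun ik : ι × ℕ => p ik.1 ik.2 fun _ => y :=
      .of_norm_bounded (hM.mul_of_nonneg (summable_geometric_of_lt_one (by positivity) hy')
        hM_nonneg fun k => by positivity) fun ik => hterm_le _ _
    have hrows (i : ι) : HasSum (fun k => p i k fun _ => y) (f i (x₀ + y)) := (hf i).hasSum hy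
    have hcols (k : ℕ) : HasSum (fun i => p i k fun _ => y) ((∑' i, p i k) fun _ => y) :=
      ContinuousMultilinearMap.hasSum_eval (hp_summable k).hasSum _
    rw [(hdouble.hasSum.prod_fiberwise hrows).tsum_eq]
    exact ((Equiv.prodComm ℕ ι).hasSum_iff.2 hdouble.hasSum).prod_fiberwise hcols

lemma analyticOnNhd_tsum {f : ι → E → F} {U : Set E} (hU : IsOpen U) {M : ι → ℝ} (hM : Summable M)
    (hf : ∀ i, AnalyticOnNhd ℂ (f i) U) (hfM : ∀ i, ∀ x ∈ U, ‖f i x‖ ≤ M i) :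
    AnalyticOnNhd ℂ (fun x => ∑' i, f i x) U := by
  intro x₀ hx₀
  obtain ⟨ρ, hρ, hball⟩ := Metric.isOpen_iff.1 hU x₀ hx₀
  have hf_ball (i : ι) : AnalyticOnNhd ℂ (f i) (Metric.ball x₀ ρ) := (hf i).mono hball
  have hfM_ball (i : ι) : ∀ x ∈ Metric.ball x₀ ρ, ‖f i x‖ ≤ M i := fun x hx => hfM i x (hball hx)
  let r : ℝ≥0 := ⟨ρ / (4 * Real.exp 1), by positivity⟩
  have hr : 0 < r := show 0 < ρ / (4 * Real.exp 1) by positivity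
  exact (hasFPowerSeriesOnBall_tsum hr hM
    (fun i => hasFPowerSeriesOnBall_taylorFPowerSeries hρ rfl (hf_ball i) (hfM_ball i))
    fun i => norm_taylorFPowerSeries_mul_pow_le hρ (hf_ball i) (hfM_ball i)).analyticAt

end SeriesOfAnalyticFunctions

section Laplace

/-- The Laplace integral `∫ u in S, u ^ a * exp (-w * u)` of a power function restricted to `S`.
Over `S = (0, ∞)` it equals `Γ (a + 1) * w ^ (-(a + 1))`; cutting `S` down to `(0, T]` is what makes
divergent Gevrey series summable. -/
def laplaceRpow (a : ℝ) (S : Set ℝ) (w : ℂ) : ℂ :=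
  ∫ u in S, ((u ^ a : ℝ) : ℂ) * Complex.exp (-(w * u))

variable {a b D T : ℝ} {S : Set ℝ} {w : ℂ}

lemma integrableOn_rpow_mul_exp_neg_mul {σ : ℝ} (ha : -1 < a) (hσ : 0 < σ) :
    IntegrableOn (fun u : ℝ => u ^ a * Real.exp (-(σ * u))) (Ioi 0) := by
  simpa using integrableOn_rpow_mul_exp_neg_mul_rpow ha one_pos hσ

lemma norm_rpow_mul_cexp_neg_mul {u : ℝ} (hu : 0 < u) (a : ℝ) (w : ℂ) :
    ‖((u ^ a : ℝ) : ℂ) * Complex.exp (-(w * u))‖ = u ^ a * Real.exp (-(w.re * u)) := by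
  simp [Complex.norm_exp, abs_of_pos (Real.rpow_pos_of_pos hu a)]

lemma integrableOn_rpow_mul_cexp_neg_mul (ha : -1 < a) (hw : 0 < w.re) :
    IntegrableOn (fun u : ℝ => ((u ^ a : ℝ) : ℂ) * Complex.exp (-(w * u))) (Ioi 0) := by
  refine (integrableOn_rpow_mul_exp_neg_mul ha hw).mono' (by fun_prop) ?_
  filter_upwards [ae_restrict_mem measurableSet_Ioi] with u hu
  exact (norm_rpow_mul_cexp_neg_mul hu a w).le

/-- The measure `u ^ a du` on `S`, whose moment generating function is `laplaceRpow a S` up to the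
sign of the argument. -/
def rpowMeasure (a : ℝ) (S : Set ℝ) : Measure ℝ :=
  (volume.restrict S).withDensity fun u => ENNReal.ofReal (u ^ a)

lemma laplaceRpow_eq_complexMGF (hS : MeasurableSet S) (hS_pos : S ⊆ Ioi 0) :
    laplaceRpow a S = ProbabilityTheory.complexMGF (fun u => -u) (rpowMeasure a S) := by
  ext w
  rw [ProbabilityTheory.complexMGF, rpowMeasure,
    integral_withDensity_eq_integral_toReal_smul (by fun_prop) (by simp)]
  refine setIntegral_congr_fun hS fun u hu => ?_
  simp [ENNReal.toReal_ofReal (Real.rpow_nonneg (le_of_lt (hS_pos hu)) a)]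

lemma Ioi_zero_subset_integrableExpSet_rpowMeasure (ha : -1 < a) (hS : MeasurableSet S)
    (hS_pos : S ⊆ Ioi 0) :
    Ioi 0 ⊆ ProbabilityTheory.integrableExpSet (fun u => -u) (rpowMeasure a S) := by
  intro σ hσ
  rw [ProbabilityTheory.integrableExpSet, Set.mem_ofPred_eq, rpowMeasure,
    integrable_withDensity_iff_integrable_smul' (by fun_prop) (by simp)]
  refine ((integrableOn_rpow_mul_exp_neg_mul ha hσ).mono_set hS_pos).congr_fun (fun u hu => ?_) hS
  simp [ENNReal.toReal_ofReal (Real.rpow_nonneg (le_of_lt (hS_pos hu)) a)]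

lemma analyticAt_laplaceRpow (ha : -1 < a) (hS : MeasurableSet S) (hS_pos : S ⊆ Ioi 0)
    (hw : 0 < w.re) : AnalyticAt ℂ (laplaceRpow a S) w := by
  rw [laplaceRpow_eq_complexMGF hS hS_pos]
  exact ProbabilityTheory.analyticAt_complexMGF <| mem_interior.2
    ⟨Ioi 0, Ioi_zero_subset_integrableExpSet_rpowMeasure ha hS hS_pos, isOpen_Ioi, hw⟩

lemma eqOn_re_pos_of_eqOn_ofReal {E : Type*} [NormedAddCommGroup E] [NormedSpace ℂ E] {f g : ℂ → E}
    (hf : AnalyticOnNhd ℂ f {z | 0 < z.re}) (hg : AnalyticOnNhd ℂ g {z | 0 < z.re})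
    (hfg : ∀ t : ℝ, 0 < t → f t = g t) : EqOn f g {z | 0 < z.re} := by
  refine hf.eqOn_of_preconnected_of_frequently_eq hg (convex_halfSpace_re_gt 0).isPreconnected
    (z₀ := ((1 : ℝ) : ℂ)) (by simp) ?_
  have hcoe : Tendsto ((↑) : ℝ → ℂ) (𝓝[≠] 1) (𝓝[≠] ((1 : ℝ) : ℂ)) :=
    Complex.continuous_ofReal.continuousAt.tendsto.inf (by simp)
  refine hcoe.frequently (Eventually.frequently ?_)
  filter_upwards [nhdsWithin_le_nhds (lt_mem_nhds one_pos)] with t ht using hfg t ht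

lemma laplaceRpow_Ioi (ha : -1 < a) (hw : 0 < w.re) :
    laplaceRpow a (Ioi 0) w = Real.Gamma (a + 1) * w ^ (-(a + 1) : ℂ) := by
  refine eqOn_re_pos_of_eqOn_ofReal (g := fun w => Real.Gamma (a + 1) * w ^ (-(a + 1) : ℂ))
    (fun z hz => analyticAt_laplaceRpow ha measurableSet_Ioi subset_rfl hz)
    (fun z hz => analyticAt_const.mul (analyticAt_id.cpow analyticAt_const (.inl hz)))
    (fun t ht => ?_) hw
  have hint := Complex.integral_cpow_mul_exp_neg_mul_Ioi (a := a + 1) (r := t)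
    (by simpa using neg_lt_iff_pos_add.1 ha) ht
  have harg : (t : ℂ).arg ≠ Real.pi := by
    simp [Complex.arg_ofReal_of_nonneg ht.le, Real.pi_ne_zero.symm]
  rw [one_div, Complex.inv_cpow _ _ harg, ← Complex.cpow_neg, mul_comm] at hint
  rw [← Complex.Gamma_ofReal]
  push_cast
  rw [← hint]
  refine setIntegral_congr_fun measurableSet_Ioi fun u hu => ?_
  simp [Complex.ofReal_cpow (le_of_lt hu)]

lemma laplaceRpow_Ioc_add_Ioi (ha : -1 < a) (hT : 0 ≤ T) (hw : 0 < w.re) :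
    laplaceRpow a (Ioc 0 T) w + laplaceRpow a (Ioi T) w = laplaceRpow a (Ioi 0) w := by
  have hint := integrableOn_rpow_mul_cexp_neg_mul ha hw
  rw [laplaceRpow, laplaceRpow, laplaceRpow, ← Ioc_union_Ioi_eq_Ioi hT,
    setIntegral_union (Ioc_disjoint_Ioi le_rfl) measurableSet_Ioi
      (hint.mono_set Ioc_subset_Ioi_self) (hint.mono_set (Ioi_subset_Ioi hT))]

lemma norm_laplaceRpow_le (hb : -1 < b) (hD : 0 ≤ D) (hw : 0 < w.re) (hS : MeasurableSet S)
    (hS_pos : S ⊆ Ioi 0) (hab : ∀ u ∈ S, u ^ a ≤ D * u ^ b) :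
    ‖laplaceRpow a S w‖ ≤ D * ((1 / w.re) ^ (b + 1) * Real.Gamma (b + 1)) := by
  have hint := integrableOn_rpow_mul_exp_neg_mul hb hw
  calc ‖laplaceRpow a S w‖ ≤ ∫ u in S, D * (u ^ b * Real.exp (-(w.re * u))) := by
        refine norm_integral_le_of_norm_le ((hint.mono_set hS_pos).const_mul D) ?_
        filter_upwards [ae_restrict_mem hS] with u hu
        rw [norm_rpow_mul_cexp_neg_mul (hS_pos hu), ← mul_assoc]
        gcongr
        exact hab u hu
    _ = D * ∫ u in S, u ^ b * Real.exp (-(w.re * u)) := integral_const_mul _ _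
    _ ≤ D * ∫ u in Ioi 0, u ^ b * Real.exp (-(w.re * u)) := by
        gcongr ?_ * ?_
        refine setIntegral_mono_set hint ?_ hS_pos.eventuallyLE
        filter_upwards [ae_restrict_mem measurableSet_Ioi] with u (hu : 0 < u)
        exact mul_nonneg (Real.rpow_nonneg hu.le b) (Real.exp_nonneg _)
    _ = D * ((1 / w.re) ^ (b + 1) * Real.Gamma (b + 1)) := by
        rw [← Real.integral_rpow_mul_exp_neg_mul_Ioi (neg_lt_iff_pos_add.1 hb) hw,
          add_sub_cancel_right]

lemma norm_laplaceRpow_Ioc_le (hb : -1 < b) (hab : b ≤ a) (hT : 0 ≤ T) (hw : 0 < w.re) :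
    ‖laplaceRpow a (Ioc 0 T) w‖ ≤ T ^ (a - b) * ((1 / w.re) ^ (b + 1) * Real.Gamma (b + 1)) := by
  refine norm_laplaceRpow_le hb (by positivity) hw measurableSet_Ioc Ioc_subset_Ioi_self ?_
  rintro u ⟨hu, huT⟩
  calc u ^ a = u ^ (a - b) * u ^ b := by rw [← Real.rpow_add hu, sub_add_cancel]
    _ ≤ T ^ (a - b) * u ^ b := by gcongr

lemma norm_laplaceRpow_Ioi_le (hb : -1 < b) (hab : a ≤ b) (hT : 0 < T) (hw : 0 < w.re) :
    ‖laplaceRpow a (Ioi T) w‖ ≤ T ^ (a - b) * ((1 / w.re) ^ (b + 1) * Real.Gamma (b + 1)) := by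
  refine norm_laplaceRpow_le hb (by positivity) hw measurableSet_Ioi (Ioi_subset_Ioi hT.le) ?_
  intro u (huT : T < u)
  have hu : 0 < u := hT.trans huT
  calc u ^ a = u ^ (a - b) * u ^ b := by rw [← Real.rpow_add hu, sub_add_cancel]
    _ ≤ T ^ (a - b) * u ^ b := mul_le_mul_of_nonneg_right
        (Real.rpow_le_rpow_of_nonpos hT huT.le (sub_nonpos.2 hab)) (Real.rpow_nonneg hu.le b)

end Laplace

section TruncatedMonomial

/-- The open sector of half-opening `α` around the positive real axis; the negative real axis is
removed also when `α > π`. -/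
def openSector (α : ℝ) : Set ℂ :=
  {z | z ∈ slitPlane ∧ |z.arg| < α}

lemma isOpen_openSector (α : ℝ) : IsOpen (openSector α) :=
  Complex.continuousOn_arg.abs.isOpen_inter_preimage isOpen_slitPlane isOpen_Iio

/-- The principal branch of `z ^ (-1 / s)`, the variable in which the Laplace integral representing
a series of Gevrey order `s` in `z` is taken. -/
def recipRoot (s : ℝ) (z : ℂ) : ℂ :=
  z ^ ((-s⁻¹ : ℝ) : ℂ)

/-- With `w = z ^ (-1 / s)` and the full half-line `(0, ∞)` in place of `(0, T]`, this is the
representation `z ^ n = Γ (s n + 1)⁻¹ * w * ∫ u ^ (s n) * exp (-w u)` of the `n`-th monomial. The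
truncation makes it summable against coefficients of Gevrey order `s`. -/
def truncatedMonomial (s T : ℝ) (n : ℕ) (z : ℂ) : ℂ :=
  (Real.Gamma (s * n + 1) : ℂ)⁻¹ * (recipRoot s z * laplaceRpow (s * n) (Ioc 0 T) (recipRoot s z))

variable {s α T : ℝ} {z : ℂ}

lemma norm_recipRoot_rpow_neg_mul (hs : s ≠ 0) (n : ℕ) :
    ‖recipRoot s z‖ ^ (-(s * n)) = ‖z‖ ^ n := by
  rw [recipRoot, Complex.norm_cpow_real, ← Real.rpow_mul (norm_nonneg z), neg_mul_neg,
    inv_mul_cancel_left₀ hs, Real.rpow_natCast]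

lemma cos_div_pos (hs : 0 < s) (hα : 0 ≤ α) (hαs : α < s * (Real.pi / 2)) :
    0 < Real.cos (α / s) :=
  Real.cos_pos_of_mem_Ioo
    ⟨by linarith [div_nonneg hα hs.le, Real.pi_pos], (div_lt_iff₀' hs).2 hαs⟩

lemma cos_mul_norm_le_re_recipRoot (hs : 0 < s) (hαs : α ≤ s * Real.pi) (hz : z ∈ openSector α) :
    Real.cos (α / s) * ‖recipRoot s z‖ ≤ (recipRoot s z).re := by
  rw [recipRoot, Complex.norm_cpow_real, Complex.cpow_ofReal_re, mul_comm, ← Real.cos_abs (_ * _),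
    abs_mul, abs_neg, abs_of_pos (inv_pos.2 hs), ← div_eq_mul_inv]
  gcongr
  exact Real.cos_le_cos_of_nonneg_of_le_pi (by positivity) ((div_le_iff₀' hs).2 hαs)
    (by gcongr; exact hz.2.le)

lemma norm_recipRoot_pos (hz : z ∈ slitPlane) : 0 < ‖recipRoot s z‖ := by
  rw [recipRoot, Complex.norm_cpow_real]
  exact Real.rpow_pos_of_pos (norm_pos_iff.2 (slitPlane_ne_zero hz)) _

lemma re_recipRoot_pos (hs : 0 < s) (hαs : α < s * (Real.pi / 2)) (hz : z ∈ openSector α) :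
    0 < (recipRoot s z).re := by
  have hα : 0 ≤ α := (abs_nonneg _).trans hz.2.le
  have hαs' : α ≤ s * Real.pi := hαs.le.trans (by gcongr; linarith [Real.pi_pos])
  exact (mul_pos (cos_div_pos hs hα hαs) (norm_recipRoot_pos hz.1)).trans_le
    (cos_mul_norm_le_re_recipRoot hs hαs' hz)

lemma recipRoot_cpow_neg_mul (hs : 0 < s) (hz : |z.arg| < s * Real.pi) (n : ℕ) :
    recipRoot s z ^ (-(s * n) : ℂ) = z ^ n := by
  have harg : |(log z * ((-s⁻¹ : ℝ) : ℂ)).im| < Real.pi := by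
    rwa [Complex.im_mul_ofReal, log_im, abs_mul, abs_neg, abs_of_pos (inv_pos.2 hs),
      ← div_eq_mul_inv, div_lt_iff₀' hs]
  rw [recipRoot, ← Complex.cpow_mul _ (abs_lt.1 harg).1 (abs_lt.1 harg).2.le,
    ← Complex.cpow_natCast]
  congr 1
  have hs' : (s : ℂ) ≠ 0 := mod_cast hs.ne'
  push_cast
  field_simp

lemma recipRoot_mul_laplaceRpow_Ioi (hs : 0 < s) (hαs : α < s * (Real.pi / 2))
    (hz : z ∈ openSector α) (n : ℕ) :
    recipRoot s z * laplaceRpow (s * n) (Ioi 0) (recipRoot s z) =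
      Real.Gamma (s * n + 1) * z ^ n := by
  have hre := re_recipRoot_pos hs hαs hz
  have hne : recipRoot s z ≠ 0 := norm_pos_iff.1 (norm_recipRoot_pos hz.1)
  have harg : |z.arg| < s * Real.pi :=
    hz.2.trans (hαs.trans (by gcongr; linarith [Real.pi_pos]))
  rw [laplaceRpow_Ioi (neg_one_lt_zero.trans_le (by positivity)) hre,
    ← recipRoot_cpow_neg_mul hs harg, neg_add, Complex.cpow_add _ _ hne, Complex.cpow_neg_one]
  push_cast
  field_simp

lemma analyticAt_truncatedMonomial (hs : 0 < s) (hαs : α < s * (Real.pi / 2))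
    (hz : z ∈ openSector α) (n : ℕ) : AnalyticAt ℂ (truncatedMonomial s T n) z := by
  have hroot : AnalyticAt ℂ (recipRoot s) z := analyticAt_id.cpow analyticAt_const hz.1
  have hlaplace : AnalyticAt ℂ (laplaceRpow (s * n) (Ioc 0 T)) (recipRoot s z) :=
    analyticAt_laplaceRpow (neg_one_lt_zero.trans_le (by positivity)) measurableSet_Ioc
      Ioc_subset_Ioi_self (re_recipRoot_pos hs hαs hz)
  exact analyticAt_const.mul (hroot.mul (hlaplace.comp hroot))

lemma norm_recipRoot_mul_rpow_le (hs : 0 < s) (hαs : α < s * (Real.pi / 2))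
    (hz : z ∈ openSector α) (N : ℕ) :
    ‖recipRoot s z‖ * (1 / (recipRoot s z).re) ^ (s * N + 1) ≤
      (Real.cos (α / s))⁻¹ * ((Real.cos (α / s) ^ s)⁻¹) ^ N * ‖z‖ ^ N := by
  have hα : 0 ≤ α := (abs_nonneg _).trans hz.2.le
  have hαs' : α ≤ s * Real.pi := hαs.le.trans (by gcongr; linarith [Real.pi_pos])
  have hcos := cos_div_pos hs hα hαs
  have hnorm : 0 < ‖recipRoot s z‖ := norm_recipRoot_pos hz.1
  calc ‖recipRoot s z‖ * (1 / (recipRoot s z).re) ^ (s * N + 1)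
      ≤ ‖recipRoot s z‖ * (1 / (Real.cos (α / s) * ‖recipRoot s z‖)) ^ (s * N + 1) := by
        gcongr
        · exact (one_div_pos.2 (re_recipRoot_pos hs hαs hz)).le
        · exact cos_mul_norm_le_re_recipRoot hs hαs' hz
    _ = (Real.cos (α / s))⁻¹ * Real.cos (α / s) ^ (-(s * N)) * ‖recipRoot s z‖ ^ (-(s * N)) := by
        rw [one_div, Real.inv_rpow (by positivity), Real.rpow_add_one (by positivity),
          Real.mul_rpow hcos.le hnorm.le, Real.rpow_neg hcos.le, Real.rpow_neg hnorm.le]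
        field_simp
    _ = (Real.cos (α / s))⁻¹ * ((Real.cos (α / s) ^ s)⁻¹) ^ N * ‖z‖ ^ N := by
        rw [norm_recipRoot_rpow_neg_mul hs.ne', Real.rpow_neg hcos.le,
          Real.rpow_mul_natCast hcos.le, inv_pow]

lemma norm_truncatedMonomial_sub_le_laplace (hs : 0 < s) (hαs : α < s * (Real.pi / 2)) (hT : 0 < T)
    (hz : z ∈ openSector α) (n N : ℕ) :
    ‖truncatedMonomial s T n z - if n < N then z ^ n else 0‖ ≤
      (Real.Gamma (s * n + 1))⁻¹ * (‖recipRoot s z‖ * (T ^ (s * n - s * N) *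
        ((1 / (recipRoot s z).re) ^ (s * N + 1) * Real.Gamma (s * N + 1)))) := by
  have hre := re_recipRoot_pos hs hαs hz
  have hn : (-1 : ℝ) < s * n := neg_one_lt_zero.trans_le (by positivity)
  have hN : (-1 : ℝ) < s * N := neg_one_lt_zero.trans_le (by positivity)
  have hΓ : 0 < Real.Gamma (s * n + 1) := Real.Gamma_pos_of_pos (by linarith)
  have hnorm (S : Set ℝ) : ‖(Real.Gamma (s * n + 1) : ℂ)⁻¹ *
      (recipRoot s z * laplaceRpow (s * n) S (recipRoot s z))‖ =
      (Real.Gamma (s * n + 1))⁻¹ *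
        (‖recipRoot s z‖ * ‖laplaceRpow (s * n) S (recipRoot s z)‖) := by
    simp [abs_of_pos hΓ]
  rcases lt_or_ge n N with hnN | hNn
  · have hdiff : truncatedMonomial s T n z - z ^ n = -((Real.Gamma (s * n + 1) : ℂ)⁻¹ *
        (recipRoot s z * laplaceRpow (s * n) (Ioi T) (recipRoot s z))) := by
      have hΓ' : (Real.Gamma (s * n + 1) : ℂ) ≠ 0 := mod_cast hΓ.ne'
      rw [← mul_right_inj' hΓ', mul_sub, ← recipRoot_mul_laplaceRpow_Ioi hs hαs hz,
        ← laplaceRpow_Ioc_add_Ioi hn hT.le hre, truncatedMonomial]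
      field_simp
      ring
    rw [if_pos hnN, hdiff, norm_neg, hnorm]
    gcongr
    exact norm_laplaceRpow_Ioi_le hN (by gcongr) hT hre
  · rw [if_neg hNn.not_gt, sub_zero, truncatedMonomial, hnorm]
    gcongr
    exact norm_laplaceRpow_Ioc_le hN (by gcongr) hT.le hre

lemma norm_truncatedMonomial_sub_le (hs : 0 < s) (hαs : α < s * (Real.pi / 2)) (hT : 0 < T)
    (hz : z ∈ openSector α) (n N : ℕ) :
    ‖truncatedMonomial s T n z - if n < N then z ^ n else 0‖ ≤
      (Real.cos (α / s))⁻¹ * (((Real.cos (α / s) * T) ^ s)⁻¹) ^ N * Real.Gamma (s * N + 1) *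
        ‖z‖ ^ N * ((T ^ s) ^ n / Real.Gamma (s * n + 1)) := by
  have hα : 0 ≤ α := (abs_nonneg _).trans hz.2.le
  have hcos := cos_div_pos hs hα hαs
  have hT_rpow : T ^ (s * n - s * N) = (T ^ s) ^ n * ((T ^ s)⁻¹) ^ N := by
    rw [Real.rpow_sub hT, Real.rpow_mul_natCast hT.le, Real.rpow_mul_natCast hT.le, inv_pow,
      div_eq_mul_inv]
  calc ‖truncatedMonomial s T n z - if n < N then z ^ n else 0‖
      ≤ _ := norm_truncatedMonomial_sub_le_laplace hs hαs hT hz n N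
    _ = (‖recipRoot s z‖ * (1 / (recipRoot s z).re) ^ (s * N + 1)) *
          (T ^ (s * n - s * N) * Real.Gamma (s * N + 1) / Real.Gamma (s * n + 1)) := by ring
    _ ≤ ((Real.cos (α / s))⁻¹ * ((Real.cos (α / s) ^ s)⁻¹) ^ N * ‖z‖ ^ N) *
          (T ^ (s * n - s * N) * Real.Gamma (s * N + 1) / Real.Gamma (s * n + 1)) := by
        gcongr ?_ * _
        exact norm_recipRoot_mul_rpow_le hs hαs hz N
    _ = _ := by
        rw [hT_rpow, Real.mul_rpow hcos.le hT.le, mul_inv, mul_pow]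
        ring

end TruncatedMonomial

section GevreySeries

variable {E F : Type*} [NormedAddCommGroup E] [NormedSpace ℂ E] [NormedAddCommGroup F]
  [NormedSpace ℂ F] {s α A C T : ℝ} {z : ℂ}

/-- The sum of the series `∑ aₙ zⁿ` of Gevrey order `s`, with each monomial replaced by its
truncated Laplace integral over `(0, T]`. -/
def truncatedBorelSum (s T : ℝ) (a : ℕ → F) (z : ℂ) : F :=
  ∑' n, truncatedMonomial s T n z • a n

lemma norm_truncatedMonomial_sub_smul_le (hs : 0 < s) (hαs : α < s * (Real.pi / 2)) (hA : 0 < A)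
    (hT : 0 < T) (hTA : T ^ s * A ≤ 1 / 2) {n : ℕ} {v : F}
    (hv : ‖v‖ ≤ C * A ^ n * Real.Gamma (s * n + 1)) (hz : z ∈ openSector α) (N : ℕ) :
    ‖(truncatedMonomial s T n z - if n < N then z ^ n else 0) • v‖ ≤
      (Real.cos (α / s))⁻¹ * C * (((Real.cos (α / s) * T) ^ s)⁻¹) ^ N * Real.Gamma (s * N + 1) *
        ‖z‖ ^ N * (1 / 2) ^ n := by
  have hcos := cos_div_pos hs ((abs_nonneg _).trans hz.2.le) hαs
  have hC : 0 ≤ C :=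
    nonneg_of_mul_nonneg_left (mul_assoc C _ _ ▸ (norm_nonneg v).trans hv) (by positivity)
  set D := (Real.cos (α / s))⁻¹ * (((Real.cos (α / s) * T) ^ s)⁻¹) ^ N * Real.Gamma (s * N + 1) *
    ‖z‖ ^ N with hD
  calc ‖(truncatedMonomial s T n z - if n < N then z ^ n else 0) • v‖
      ≤ D * ((T ^ s) ^ n / Real.Gamma (s * n + 1)) * (C * A ^ n * Real.Gamma (s * n + 1)) := by
        rw [norm_smul]
        gcongr
        exact norm_truncatedMonomial_sub_le hs hαs hT hz n N
    _ = D * C * (T ^ s * A) ^ n := by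
        rw [mul_pow]
        field_simp
    _ ≤ D * C * (1 / 2) ^ n := by gcongr
    _ = _ := by
        rw [hD]
        ring

lemma norm_truncatedBorelSum_sub_sum_le [CompleteSpace F] (hs : 0 < s)
    (hαs : α < s * (Real.pi / 2)) (hA : 0 < A) (hT : 0 < T) (hTA : T ^ s * A ≤ 1 / 2) {a : ℕ → F}
    (ha : ∀ n : ℕ, ‖a n‖ ≤ C * A ^ n * Real.Gamma (s * n + 1)) (hz : z ∈ openSector α) (N : ℕ) :
    ‖truncatedBorelSum s T a z - ∑ n ∈ Finset.range N, z ^ n • a n‖ ≤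
      (Real.cos (α / s))⁻¹ * C * (((Real.cos (α / s) * T) ^ s)⁻¹) ^ N * Real.Gamma (s * N + 1) *
        ‖z‖ ^ N * 2 := by
  have hterm (N n : ℕ) := norm_truncatedMonomial_sub_smul_le hs hαs hA hT hTA (ha n) hz N
  have hsummable : Summable fun n => truncatedMonomial s T n z • a n := by
    refine .of_norm_bounded (summable_geometric_two.mul_left ((Real.cos (α / s))⁻¹ * C)) fun n => ?_
    simpa using hterm 0 n
  have hpoly : HasSum (fun n => (if n < N then z ^ n else 0) • a n)
      (∑ n ∈ Finset.range N, z ^ n • a n) := by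
    have hzero : ∀ n ∉ Finset.range N, (if n < N then z ^ n else 0) • a n = 0 := by simp_all
    have hsum := hasSum_sum_of_ne_finset_zero (L := .unconditional ℕ) hzero
    rwa [Finset.sum_congr rfl fun n hn => by rw [if_pos (Finset.mem_range.1 hn)]] at hsum
  have hdiff : truncatedBorelSum s T a z - ∑ n ∈ Finset.range N, z ^ n • a n =
      ∑' n, (truncatedMonomial s T n z - if n < N then z ^ n else 0) • a n := by
    simp only [sub_smul]
    exact (hsummable.hasSum.sub hpoly).tsum_eq.symm
  rw [hdiff]
  exact tsum_of_norm_bounded (hasSum_geometric_two.mul_left _) (hterm N)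

lemma analyticOnNhd_truncatedBorelSum [CompleteSpace F] (hs : 0 < s)
    (hαs : α < s * (Real.pi / 2)) (hA : 0 < A) (hT : 0 < T) (hTA : T ^ s * A ≤ 1 / 2)
    {U : Set E} (hU : IsOpen U) {ζ : E → ℂ} (hζ : AnalyticOnNhd ℂ ζ U)
    (hζU : MapsTo ζ U (openSector α)) {a : ℕ → E → F} (ha : ∀ n, AnalyticOnNhd ℂ (a n) U)
    (haC : ∀ n : ℕ, ∀ x ∈ U, ‖a n x‖ ≤ C * A ^ n * Real.Gamma (s * n + 1)) :
    AnalyticOnNhd ℂ (fun x => truncatedBorelSum s T (fun n => a n x) (ζ x)) U := by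
  refine analyticOnNhd_tsum hU (summable_geometric_two.mul_left ((Real.cos (α / s))⁻¹ * C))
    (fun n x hx => ?_) (fun n x hx => ?_)
  · exact ((analyticAt_truncatedMonomial hs hαs (hζU hx) n).comp (hζ x hx)).smul (ha n x hx)
  · simpa using norm_truncatedMonomial_sub_smul_le hs hαs hA hT hTA (haC n x hx) (hζU hx) 0

lemma exists_gevrey_asymptotics_preimage_openSector [CompleteSpace F] (hs : 0 < s) (hα : 0 ≤ α)
    (hαs : α < s * (Real.pi / 2)) {U : Set E} (hU : IsOpen U) {ζ : E → ℂ}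
    (hζ : AnalyticOnNhd ℂ ζ U) {a : ℕ → E → F} (ha : ∀ n, AnalyticOnNhd ℂ (a n) U)
    (hC : 0 < C) (hA : 0 < A)
    (haC : ∀ n : ℕ, ∀ x ∈ U, ‖a n x‖ ≤ C * A ^ n * Real.Gamma (s * n + 1)) :
    ∃ f : E → F, AnalyticOnNhd ℂ f (U ∩ ζ ⁻¹' openSector α) ∧
      ∃ K B : ℝ, 0 < K ∧ 0 < B ∧ ∀ N : ℕ, ∀ x ∈ U ∩ ζ ⁻¹' openSector α,
        ‖f x - ∑ n ∈ Finset.range N, ζ x ^ n • a n x‖ ≤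
          K * B ^ N * Real.Gamma (s * N + 1) * ‖ζ x‖ ^ N := by
  let T : ℝ := ((2 * A)⁻¹) ^ s⁻¹
  have hT : 0 < T := by positivity
  have hTA : T ^ s * A ≤ 1 / 2 := by
    rw [Real.rpow_inv_rpow (by positivity) hs.ne']
    field_simp
    rfl
  have hcos := cos_div_pos hs hα hαs
  refine ⟨fun x => truncatedBorelSum s T (fun n => a n x) (ζ x), ?_,
    2 * (Real.cos (α / s))⁻¹ * C, ((Real.cos (α / s) * T) ^ s)⁻¹, by positivity, by positivity,
    fun N x hx => ?_⟩
  · exact analyticOnNhd_truncatedBorelSum hs hαs hA hT hTA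
      (hζ.continuousOn.isOpen_inter_preimage hU (isOpen_openSector α))
      (hζ.mono inter_subset_left) (fun x hx => hx.2)
      (fun n => (ha n).mono inter_subset_left) fun n x hx => haC n x hx.1
  · exact (norm_truncatedBorelSum_sub_sum_le hs hαs hA hT hTA (haC · x hx.1) hx.2 N).trans_eq
      (by ring)

end GevreySeries

section Sectors

/-- The nonzero complex numbers having a determination of the argument in `(a, b)`. -/
def argSector (a b : ℝ) : Set ℂ :=
  {z | z ≠ 0 ∧ ∃ θ ∈ Ioo a b, z = (‖z‖ : ℂ) * Complex.exp (θ * I)}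

lemma mul_exp_neg_midpoint_mem_openSector {a b : ℝ} (hab : b ≤ a + 2 * Real.pi) {z : ℂ}
    (hz : z ∈ argSector a b) :
    z * Complex.exp (-((a + b) / 2 : ℝ) * I) ∈ openSector ((b - a) / 2) := by
  obtain ⟨hz0, θ, ⟨haθ, hθb⟩, hzθ⟩ := hz
  have hpolar : z * Complex.exp (-((a + b) / 2 : ℝ) * I) =
      (‖z‖ : ℂ) * Complex.exp ((θ - (a + b) / 2 : ℝ) * I) := by
    conv_lhs => rw [hzθ, mul_assoc, ← Complex.exp_add, ← add_mul]
    push_cast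
    rw [sub_eq_add_neg]
  have harg : (z * Complex.exp (-((a + b) / 2 : ℝ) * I)).arg = θ - (a + b) / 2 := by
    rw [hpolar, Complex.exp_mul_I]
    exact Complex.arg_mul_cos_add_sin_mul_I (norm_pos_iff.2 hz0) ⟨by linarith, by linarith⟩
  refine ⟨Complex.mem_slitPlane_iff_arg.2 ⟨?_, by simp [hz0]⟩, ?_⟩
  · rw [harg]
    linarith
  · rw [harg, abs_lt]
    constructor <;> linarith

lemma isOpen_polydisk (d : ℕ) (r : ℝ) : IsOpen (polydisk d r) := by
  simp only [polydisk, ofPred_forall]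
  exact isOpen_iInter_of_finite fun j => isOpen_lt (by fun_prop) continuous_const

end Sectors

theorem borel_ritt_gevrey_for_germ_asymptotics_general
    {E F : Type*} [NormedAddCommGroup E] [NormedSpace ℂ E] [NormedAddCommGroup F]
    [NormedSpace ℂ F] [CompleteSpace F] {s : ℝ} (hs : 0 < s)
    {U : Set E} (hU : IsOpen U) {P : E → ℂ} (hP : AnalyticOnNhd ℂ P U)
    {θ₁ θ₂ : ℝ} (hθ : θ₁ < θ₂) (hθ2 : θ₂ ≤ θ₁ + 2 * Real.pi) (hopen : θ₂ - θ₁ < s * Real.pi)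
    {g : ℕ → E → F} (hgA : ∀ n, AnalyticOnNhd ℂ (g n) U) {C A : ℝ} (hC : 0 < C) (hA : 0 < A)
    (hgB : ∀ n : ℕ, ∀ x ∈ U, ‖g n x‖ ≤ C * A ^ n * Real.Gamma (s * n + 1)) :
    ∃ f : E → F, AnalyticOnNhd ℂ f (U ∩ P ⁻¹' argSector θ₁ θ₂) ∧
      ∃ K B : ℝ, 0 < K ∧ 0 < B ∧ ∀ N : ℕ, ∀ x ∈ U ∩ P ⁻¹' argSector θ₁ θ₂,
        ‖f x - ∑ n ∈ Finset.range N, P x ^ n • g n x‖ ≤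
          K * B ^ N * Real.Gamma (s * N + 1) * ‖P x‖ ^ N := by
  let rot : ℂ := Complex.exp (-((θ₁ + θ₂) / 2 : ℝ) * I)
  have hrot_norm : ‖rot‖ = 1 := by
    simpa [rot] using Complex.norm_exp_ofReal_mul_I (-((θ₁ + θ₂) / 2))
  have hrot : rot ≠ 0 := Complex.exp_ne_zero _
  have hcancel (x : E) (n : ℕ) : (P x * rot) ^ n • rot⁻¹ ^ n • g n x = P x ^ n • g n x := by
    rw [smul_smul, ← mul_pow, mul_inv_cancel_right₀ hrot]
  have hsub : U ∩ P ⁻¹' argSector θ₁ θ₂ ⊆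
      U ∩ (fun x => P x * rot) ⁻¹' openSector ((θ₂ - θ₁) / 2) :=
    fun x hx => ⟨hx.1, mul_exp_neg_midpoint_mem_openSector hθ2 hx.2⟩
  obtain ⟨f, hf, K, B, hK, hB, hbound⟩ := exists_gevrey_asymptotics_preimage_openSector
    (α := (θ₂ - θ₁) / 2) hs (by linarith) (by linarith) hU (hP.mul analyticOnNhd_const)
    (fun n => analyticOnNhd_const.smul (hgA n)) hC hA
    (a := fun n x => rot⁻¹ ^ n • g n x)
    fun n x hx => by simpa [norm_smul, hrot_norm] using hgB n x hx
  refine ⟨f, hf.mono hsub, K, B, hK, hB, fun N x hx => ?_⟩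
  simpa only [hcancel, norm_mul, hrot_norm, mul_one] using hbound N x (hsub hx)

/-- **Borel–Ritt–Gevrey theorem for asymptotics with respect to a germ** (Proposition 7.14).
Given Gevrey-bounded coefficients `g_n` on `D(0;ρ₁)` and a `P`-sector of opening `< sπ`,
there is a holomorphic `f` near `0` on the sector with
`|f − Σ_{n<N} g_n·P^n| ≤ K·B^N·Γ(sN+1)·|P|^N` for all `N`. -/
theorem borel_ritt_gevrey_for_germ_asymptotics
    (d : ℕ) (hd : 1 ≤ d) (s : ℝ) (hs : 0 < s) (R : ℝ) (hR : 0 < R)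
    (P : (Fin d → ℂ) → ℂ) (hP : AnalyticOnNhd ℂ P (polydisk d R))
    (hP0 : P 0 = 0) (hPne : ∃ x ∈ polydisk d R, P x ≠ 0)
    (θ₁ θ₂ : ℝ) (hθ : θ₁ < θ₂) (hθ2 : θ₂ ≤ θ₁ + 2 * Real.pi)
    (hopen : θ₂ - θ₁ < s * Real.pi)
    (r : ℝ) (hr : 0 < r) (hrR : r ≤ R)
    (ρ₁ : ℝ) (hρ₁ : 0 < ρ₁) (hρ₁R : ρ₁ ≤ R)
    (g : ℕ → (Fin d → ℂ) → ℂ)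
    (hgA : ∀ n, AnalyticOnNhd ℂ (g n) (polydisk d ρ₁))
    (C A : ℝ) (hC : 0 < C) (hA : 0 < A)
    (hgB : ∀ n : ℕ, ∀ x ∈ polydisk d ρ₁,
      ‖g n x‖ ≤ C * A ^ n * Real.Gamma (s * n + 1)) :
    ∃ ρ > 0, ρ ≤ ρ₁ ∧
      ∃ f : (Fin d → ℂ) → ℂ,
        AnalyticOnNhd ℂ f (PSector d P θ₁ θ₂ r ∩ polydisk d ρ) ∧
        ∃ K B : ℝ, 0 < K ∧ 0 < B ∧
          ∀ N : ℕ, ∀ x ∈ PSector d P θ₁ θ₂ r ∩ polydisk d ρ,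
            ‖f x - ∑ n ∈ Finset.range N, g n x * P x ^ n‖ ≤
              K * B ^ N * Real.Gamma (s * N + 1) * ‖P x‖ ^ N := by
  have hsector : PSector d P θ₁ θ₂ r ∩ polydisk d ρ₁ ⊆ polydisk d ρ₁ ∩ P ⁻¹' argSector θ₁ θ₂ :=
    fun x hx => ⟨hx.2, hx.1.2⟩
  obtain ⟨f, hf, K, B, hK, hB, hbound⟩ := borel_ritt_gevrey_for_germ_asymptotics_general hs
    (isOpen_polydisk d ρ₁) (hP.mono fun x hx j => (hx j).trans_le hρ₁R) hθ hθ2 hopen hgA hC hA hgB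
  refine ⟨ρ₁, hρ₁, le_rfl, f, hf.mono hsector, K, B, hK, hB, fun N x hx => ?_⟩
  simpa only [smul_eq_mul, mul_comm] using hbound N x (hsector hx)
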